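/- Let F_i(x) = xᵀ M_i x (i = 1,2) with M₁, M₂ symmetric integer s×s matrices. Let c ∈ ℤ² be primitive with det(M_c) ≠ 0, where M_c = c₁M₁ + c₂M₂, and set F*_c(u) = uᵀ adj(M_c) u, where adj denotes the adjugate matrix (so F*_c(u) = det(M_c) · uᵀ M_c^{−1} u). Let p be a prime with p ∤ 2 det(M_c), let k ≥ 1 be an integer, and let u ∈ ℤ^s. Then: (i) if s is even, or if s is odd and k is even, |S_{p^k, c}(u)| ≤ p^{sk/2} · gcd(F*_c(u), p^k); (ii) if s and k are both odd, then S_{p^k, c}(u) = 0 whenever F*_c(u) = 0, and |S_{p^k, c}(u)| ≤ p^{k(s+1)/2} · gcd(F*_c(u), p^k)^{1/2} otherwise. (Here gcd(0, p^k) = p^k.) -/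

import Mathlib

open MeasureTheory Real Matrix Finset

noncomputable section

/-- `e(x) = exp(2πix)`. -/
def e2pi (x : ℝ) : ℂ := Complex.exp (2 * Real.pi * Complex.I * x)

/-- Euclidean norm on `ℝ²`. -/
def nrm2 (x : ℝ × ℝ) : ℝ := Real.sqrt (x.1 ^ 2 + x.2 ^ 2)

/-- Dot product on `ℝ²`. -/
def dot2 (x y : ℝ × ℝ) : ℝ := x.1 * y.1 + x.2 * y.2

/-- `x^⊥ = (x₂, -x₁)`. -/
def perp2 (x : ℝ × ℝ) : ℝ × ℝ := (x.2, -x.1)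

/-- `δ_n` for `n ∈ ℤ²`. -/
def deltaInt (n : ℤ × ℤ) : ℂ := if n = 0 then 1 else 0

/-- `h(y,z) = Σ_{j ≥ 1} (1/(yj)) (ω(yj) − ω(|z|/(yj)))`. -/
def hFun (ω : ℝ → ℝ) (y z : ℝ) : ℝ :=
  ∑' j : ℕ+, (1 / (y * ((j : ℕ) : ℝ))) *
    (ω (y * ((j : ℕ) : ℝ)) - ω (|z| / (y * ((j : ℕ) : ℝ))))

/-- `c = (∫_{ℝ²} ω(|x|) dx)⁻¹`. -/
def cConst (ω : ℝ → ℝ) : ℝ := (∫ x : ℝ × ℝ, ω (nrm2 x))⁻¹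

/-- The function `p_{1,q}`. -/
def p1 (ω ω₀ : ℝ → ℝ) (Q : ℝ) (q : ℕ) (w : ℝ × ℝ) : ℂ :=
  -(cConst ω / Q : ℝ) * ∫ x : ℝ × ℝ,
    (((ω₀ (nrm2 x / Q ^ ((3 : ℝ) / 2)) *
      ∑' j : ℕ+, (1 / ((q : ℝ) * ((j : ℕ) : ℝ)) ^ 2) *
        ω (nrm2 x / (((j : ℕ) : ℝ) * (q : ℝ) * Q ^ ((1 : ℝ) / 2)))) : ℝ) : ℂ) *
      e2pi (-(dot2 w x))

/-- The function `p_{2,r,k,q}` (with `q` allowed to be a real parameter). -/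
def p2 (ω ω₀ : ℝ → ℝ) (Q : ℝ) (r : ℤ × ℤ) (k : ℕ) (q : ℝ) (w : ℝ × ℝ) : ℂ :=
  ((cConst ω / Q ^ 3 : ℝ) : ℂ) * ∫ x : ℝ × ℝ,
    (((ω₀ (nrm2 x / Q ^ ((3 : ℝ) / 2)) *
      hFun ω ((k : ℝ) * q / Q) (((r.1 : ℝ) * x.1 + (r.2 : ℝ) * x.2) / Q ^ 2)) : ℝ) : ℂ) *
      e2pi (-(dot2 w x))

/-- The lattice `Λ(a,q) = {k a + q y}` as a subset of `ℤ²`. -/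
def Lambda (a : ℤ × ℤ) (q : ℕ) : Set (ℤ × ℤ) :=
  {v | ∃ k : ℤ, ∃ y : ℤ × ℤ, v = (k * a.1 + (q : ℤ) * y.1, k * a.2 + (q : ℤ) * y.2)}

/-- `k(r) = gcd(r₁,r₂)/gcd(gcd(r₁,r₂),q)`. -/
def kOf (r : ℤ × ℤ) (q : ℕ) : ℕ := Int.gcd r.1 r.2 / Nat.gcd (Int.gcd r.1 r.2) q

/-- The function `p_{Λ(a,q)}`. -/
def pLambda (ω ω₀ : ℝ → ℝ) (Q : ℝ) (q : ℕ) (a : ℤ × ℤ) (w : ℝ × ℝ) : ℂ :=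
  p1 ω ω₀ Q q w +
    ∑' r : ℤ × ℤ,
      Set.indicator {r : ℤ × ℤ | r ∈ Lambda a q ∧ r ≠ 0}
        (fun r => ((ω (nrm2 ((r.1 : ℝ), (r.2 : ℝ)) / Q ^ ((1 : ℝ) / 2)) : ℝ) : ℂ) *
          p2 ω ω₀ Q r (kOf r q) (q : ℝ) w) r

/-- Reduced residues `a mod q` (canonical representatives) with `gcd(a₁,a₂,q)=1`. -/
def residues (q : ℕ) : Finset (ℕ × ℕ) :=
  ((Finset.range q) ×ˢ (Finset.range q)).filter (fun a => Nat.gcd (Nat.gcd a.1 a.2) q = 1)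

/-- Normalized directional derivative along `ξ`. -/
def dirDeriv (ξ : ℝ × ℝ) (f : ℝ × ℝ → ℂ) : ℝ × ℝ → ℂ :=
  fun w => fderiv ℝ f w (ξ.1 / nrm2 ξ, ξ.2 / nrm2 ξ)

/-- Fourier transform `ω̂₀(t) = ∫ ω₀(x) e(−xt) dx`. -/
def fourierW0 (ω₀ : ℝ → ℝ) (t : ℝ) : ℂ := ∫ x : ℝ, ((ω₀ x : ℝ) : ℂ) * e2pi (-(x * t))

/-- `|M(w)x|` for the 3×2 matrix `M(w)`. -/
def Mnorm (Q : ℝ) (w : ℝ × ℝ) (x : ℝ × ℝ) : ℝ :=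
  Real.sqrt (x.1 ^ 2 / Q + x.2 ^ 2 / Q + Q ^ 2 * (w.1 * x.2 - w.2 * x.1) ^ 2)

/-- `μ_{M(w)}(Λ(a,q))`: infimum of `|M(w)x|` over nonzero lattice points. -/
def muM (Q : ℝ) (w : ℝ × ℝ) (a : ℤ × ℤ) (q : ℕ) : ℝ :=
  sInf {t : ℝ | ∃ v : ℤ × ℤ, v ∈ Lambda a q ∧ v ≠ 0 ∧ t = Mnorm Q w ((v.1 : ℝ), (v.2 : ℝ))}

/-- Quadratic form attached to an integer matrix, over any commutative ring. -/
def quadEval {s : ℕ} {R : Type*} [CommRing R] (M : Matrix (Fin s) (Fin s) ℤ)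
    (x : Fin s → R) : R :=
  ∑ i, ∑ j, (M i j : R) * x i * x j

/-- `e_q(n) = exp(2πin/q)` for an integer `n`. -/
def eqc (q : ℕ) (n : ℤ) : ℂ := e2pi ((n : ℝ) / (q : ℝ))

/-- The exponential sum `D_q(u)`. -/
def Dq (s : ℕ) (M₁ M₂ : Matrix (Fin s) (Fin s) ℤ) (q : ℕ) (u : Fin s → ℤ) : ℂ :=
  ∑ a ∈ residues q, ∑ b ∈ Fintype.piFinset (fun _ : Fin s => Finset.range q),
    eqc q ((a.1 : ℤ) * quadEval M₁ (fun i => (b i : ℤ)) +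
      (a.2 : ℤ) * quadEval M₂ (fun i => (b i : ℤ)) + ∑ i, (b i : ℤ) * u i)

/-- The exponential sum `S_{q,dc}(u)`. -/
def Sq (s : ℕ) (M₁ M₂ : Matrix (Fin s) (Fin s) ℤ) (q d : ℕ) (c : ℤ × ℤ)
    (u : Fin s → ℤ) : ℂ :=
  ∑ a ∈ (residues q).filter
      (fun a => (q : ℤ) ∣ (d : ℤ) * (c.1 * (a.2 : ℤ) - c.2 * (a.1 : ℤ))),
    ∑ b ∈ Fintype.piFinset (fun _ : Fin s => Finset.range q),
      eqc q ((a.1 : ℤ) * quadEval M₁ (fun i => (b i : ℤ)) +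
        (a.2 : ℤ) * quadEval M₂ (fun i => (b i : ℤ)) + ∑ i, (b i : ℤ) * u i)

/-- The pair of quadratic forms given by `M₁, M₂` is nonsingular: at every nonzero
complex common zero the gradients (equivalently `M₁x`, `M₂x`) are linearly independent. -/
def NonsingularPair (s : ℕ) (M₁ M₂ : Matrix (Fin s) (Fin s) ℤ) : Prop :=
  ∀ x : Fin s → ℂ, x ≠ 0 →
    quadEval M₁ x = 0 → quadEval M₂ x = 0 →
    LinearIndependent ℂ
      ![(M₁.map (fun z : ℤ => (z : ℂ))).mulVec x, (M₂.map (fun z : ℤ => (z : ℂ))).mulVec x]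

/-- Euclidean norm on `Fin m → ℝ`. -/
def enorm' {m : ℕ} (v : Fin m → ℝ) : ℝ := Real.sqrt (∑ i, v i ^ 2)

end

/-!
The pairs `a` occurring in `S_{p^k,c}(u)` are exactly the unit multiples `t c`, so the sum is
`∑ₜ ∑ₓ e(t Q(x) + x·u)` with `Q` the form of `M_c` modulo `p^k`. Completing the square in `x` turns
it into `∑ₜ e(-Q(w)/t) G(t⁻¹ Q)`, where `G(Q) = ∑ₓ e(Q(x))` and `-Q(w)` is a unit times `F*_c(u)`.

The point is that `G(t Q) = χ(t)^{sk} G(Q)` for the Legendre symbol `χ`, which does not require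
diagonalizing `Q`. Multiplying `t` by a square does not change `G(t Q)`, and every unit is a square
times some `a² + b²`; rotating `Q ⊕ Q` by `(a, b)` gives `G(t Q)² = G(Q)²`. Hence
`G(t Q) = χ(t)^i G(Q)` with `i ∈ {0, 1}`. Averaging over `t` writes `φ(p^k) G(Q)` as an integer
times the Gauss sum of `χ^i` modulo `p`, whose absolute value is `p^{i/2}`. Since
`|G(Q)|² = p^{sk}`, the exponents `i` and `sk` have the same parity.

What remains is `|S| = p^{sk/2} |g|` with `g` the Gauss sum modulo `p^k` of the lift of `χ^{sk}`,
evaluated at `F*_c(u)`. It vanishes unless `p^{k-1}` divides `F*_c(u)`, and is then `p^{k-1}` times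
a Gauss sum modulo `p`.
-/

section QuadraticGaussSum

variable {R V W : Type*} [CommRing R] [AddCommGroup V] [Module R V] [AddCommGroup W] [Module R W]

/-- The Gauss sum `∑ₓ ψ(Q x)` of a quadratic form with respect to an additive character of the
base ring. Its twist `∑ₓ ψ(t Q x)` is `quadGaussSum ψ (t • Q)`. -/
def quadGaussSum [Fintype V] (ψ : AddChar R ℂ) (Q : QuadraticForm R V) : ℂ :=
  ∑ x, ψ (Q x)

lemma quadGaussSum_congr [Fintype V] [Fintype W] (ψ : AddChar R ℂ) {Q : QuadraticForm R V}
    {Q' : QuadraticForm R W} (h : Q.Equivalent Q') : quadGaussSum ψ Q = quadGaussSum ψ Q' := by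
  obtain ⟨e⟩ := h
  rw [quadGaussSum, quadGaussSum, ← e.toEquiv.sum_comp]
  exact sum_congr rfl fun x _ => congrArg ψ (e.map_app x).symm

lemma quadGaussSum_prod [Fintype V] [Fintype W] (ψ : AddChar R ℂ) (Q : QuadraticForm R V)
    (Q' : QuadraticForm R W) :
    quadGaussSum ψ (Q.prod Q') = quadGaussSum ψ Q * quadGaussSum ψ Q' := by
  simp only [quadGaussSum, sum_mul_sum, Fintype.sum_prod_type, QuadraticMap.prod_apply,
    AddChar.map_add_eq_mul]

lemma equivalent_mul_sq_smul (Q : QuadraticForm R V) (t : R) (r : Rˣ) :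
    ((t * (r : R) ^ 2) • Q).Equivalent (t • Q) :=
  ⟨{ LinearEquiv.smulOfUnit r with
      map_app' := fun x => by
        change (t • Q) ((r : R) • x) = ((t * (r : R) ^ 2) • Q) x
        rw [QuadraticMap.map_smul, _root_.smul_apply, _root_.smul_apply, smul_smul]
        congr 1
        ring }⟩

lemma equivalent_add_sq_smul_prod (Q : QuadraticForm R V) {a b : R} (h : IsUnit (a ^ 2 + b ^ 2)) :
    (((a ^ 2 + b ^ 2) • Q).prod ((a ^ 2 + b ^ 2) • Q)).Equivalent (Q.prod Q) := by
  obtain ⟨c, hc⟩ := h.exists_left_inv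
  let e : (V × V) ≃ₗ[R] V × V :=
    { toFun := fun z => (a • z.1 - b • z.2, b • z.1 + a • z.2)
      invFun := fun z => (c • (a • z.1 + b • z.2), c • (a • z.2 - b • z.1))
      map_add' := fun z w => by ext <;> dsimp only [Prod.fst_add, Prod.snd_add] <;> module
      map_smul' := fun r z => by ext <;> dsimp <;> module
      left_inv := fun z => by
        ext
        · exact (show _ = (c * (a ^ 2 + b ^ 2)) • z.1 by module).trans (by rw [hc, one_smul])
        · exact (show _ = (c * (a ^ 2 + b ^ 2)) • z.2 by module).trans (by rw [hc, one_smul])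
      right_inv := fun z => by
        ext
        · exact (show _ = (c * (a ^ 2 + b ^ 2)) • z.1 by module).trans (by rw [hc, one_smul])
        · exact (show _ = (c * (a ^ 2 + b ^ 2)) • z.2 by module).trans (by rw [hc, one_smul]) }
  refine ⟨{ e with map_app' := fun z => ?_ }⟩
  simp only [e, QuadraticMap.prod_apply, _root_.smul_apply, sub_eq_add_neg,
    QuadraticMap.map_add Q, ← neg_smul, QuadraticMap.map_smul, QuadraticMap.polar_smul_left,
    QuadraticMap.polar_smul_right, smul_eq_mul]
  ring

lemma quadGaussSum_add_sq_smul_sq [Fintype V] (ψ : AddChar R ℂ) (Q : QuadraticForm R V) {a b : R}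
    (h : IsUnit (a ^ 2 + b ^ 2)) :
    quadGaussSum ψ ((a ^ 2 + b ^ 2) • Q) ^ 2 = quadGaussSum ψ Q ^ 2 := by
  simpa only [quadGaussSum_prod, ← pow_two] using
    quadGaussSum_congr ψ (equivalent_add_sq_smul_prod Q h)

lemma sum_mul_add_polar_eq [Fintype V] (ψ : AddChar R ℂ) (Q : QuadraticForm R V) (t : Rˣ)
    (w : V) : ∑ x, ψ (t * Q x + QuadraticMap.polar Q x w)
      = ψ ((t⁻¹ : Rˣ) * -Q w) * quadGaussSum ψ (((t⁻¹ : Rˣ) : R) • Q) := by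
  rw [quadGaussSum, mul_sum, ← Equiv.sum_comp (MulAction.toPerm t⁻¹), ← Equiv.sum_comp
    (Equiv.addRight w) fun x => ψ (((t⁻¹ : Rˣ) : R) * -Q w) * ψ ((((t⁻¹ : Rˣ) : R) • Q) x)]
  refine sum_congr rfl fun x _ => ?_
  rw [← AddChar.map_add_eq_mul, MulAction.toPerm_apply, Units.smul_def, Equiv.coe_addRight,
    _root_.smul_apply, QuadraticMap.map_add Q x w, QuadraticMap.map_smul,
    QuadraticMap.polar_smul_left]
  simp only [smul_eq_mul]
  congr 1
  linear_combination ((t⁻¹ : Rˣ) : R) * Q x * t.mul_inv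

lemma sum_polar_eq_ite [Fintype V] {ψ : AddChar R ℂ} (hψ : ψ.IsPrimitive)
    {Q : QuadraticForm R V} (hQ : Q.polarBilin.SeparatingLeft) (x : V) [Decidable (x = 0)] :
    ∑ y, ψ (QuadraticMap.polar Q x y) = if x = 0 then (Fintype.card V : ℂ) else 0 := by
  classical
  have hψx : ψ.compAddMonoidHom (Q.polarBilin x).toAddMonoidHom = 0 ↔ x = 0 := by
    refine ⟨fun h => hQ x fun y => ?_, fun h => by ext y; simp [h]⟩
    by_contra hxy
    refine hψ hxy (AddChar.ext _ _ fun r => ?_)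
    simpa [mul_comm] using DFunLike.congr_fun h (r • y)
  refine (AddChar.sum_eq_ite (ψ.compAddMonoidHom (Q.polarBilin x).toAddMonoidHom)).trans ?_
  simp only [hψx]

lemma norm_quadGaussSum_sq [Finite R] [Fintype V] {ψ : AddChar R ℂ} (hψ : ψ.IsPrimitive)
    {Q : QuadraticForm R V} (hQ : Q.polarBilin.SeparatingLeft) :
    ‖quadGaussSum ψ Q‖ ^ 2 = Fintype.card V := by
  classical
  have h : quadGaussSum ψ Q * starRingEnd ℂ (quadGaussSum ψ Q) = Fintype.card V :=
    calc quadGaussSum ψ Q * starRingEnd ℂ (quadGaussSum ψ Q)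
        = ∑ y, ∑ x, ψ (Q x - Q y) := by
          simp only [quadGaussSum, map_sum, ← AddChar.map_neg_eq_conj, sum_mul_sum,
            ← AddChar.map_add_eq_mul, ← sub_eq_add_neg]
          exact sum_comm
      _ = ∑ y, ∑ x, ψ (Q x) * ψ (QuadraticMap.polar Q x y) := by
          refine sum_congr rfl fun y _ => ?_
          rw [← Equiv.sum_comp (Equiv.addRight y)]
          refine sum_congr rfl fun x _ => ?_
          rw [← AddChar.map_add_eq_mul, Equiv.coe_addRight, QuadraticMap.map_add Q]
          congr 1
          ring
      _ = ∑ x, ψ (Q x) * if x = 0 then (Fintype.card V : ℂ) else 0 := by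
          rw [sum_comm]
          exact sum_congr rfl fun x _ => by rw [← mul_sum, sum_polar_eq_ite hψ hQ]
      _ = Fintype.card V := by simp
  rw [Complex.mul_conj'] at h
  exact_mod_cast h

end QuadraticGaussSum

section PrimePowerModulus

variable {p k : ℕ} [Fact p.Prime]

lemma isUnit_intCast_prime_pow_iff (hk : k ≠ 0) (n : ℤ) :
    IsUnit (n : ZMod (p ^ k)) ↔ ¬ (p : ℤ) ∣ n := by
  rw [ZMod.coe_int_isUnit_iff_isCoprime, Nat.cast_pow, IsCoprime.pow_left_iff hk.bot_lt,
    (Nat.prime_iff_prime_int.mp Fact.out).coprime_iff_not_dvd]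

lemma isUnit_cast_prime_pow_iff (hk : k ≠ 0) (t : ZMod (p ^ k)) :
    IsUnit (t.cast : ZMod p) ↔ IsUnit t := by
  obtain ⟨n, rfl⟩ := ZMod.intCast_surjective t
  rw [ZMod.cast_intCast (dvd_pow_self p hk), isUnit_intCast_prime_pow_iff hk, isUnit_iff_ne_zero,
    Ne, ZMod.intCast_zmod_eq_zero_iff_dvd]

lemma isSquare_of_isSquare_cast (hp2 : p ≠ 2) (hk : k ≠ 0) {t : ZMod (p ^ k)} (ht : IsUnit t)
    (h : IsSquare (t.cast : ZMod p)) : IsSquare t := by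
  obtain ⟨u, rfl⟩ := ht
  obtain ⟨m, rfl⟩ := Nat.exists_eq_succ_of_ne_zero hk
  obtain ⟨n, hn⟩ := ZMod.intCast_surjective (u : ZMod (p ^ m.succ))
  obtain ⟨r, hr⟩ := h
  obtain ⟨b, rfl⟩ := ZMod.intCast_surjective r
  rw [← hn, ZMod.cast_intCast (dvd_pow_self p hk), ← Int.cast_mul, ← sub_eq_zero, ← Int.cast_sub,
    ZMod.intCast_zmod_eq_zero_iff_dvd] at hr
  -- `t ≡ b²` modulo `p` improves to `t ^ p ^ m ≡ (b²) ^ p ^ m` modulo `p ^ (m + 1)`.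
  have hpow : (u : ZMod (p ^ m.succ)) ^ p ^ m = ((b : ZMod (p ^ m.succ)) * b) ^ p ^ m := by
    have := dvd_sub_pow_of_dvd_sub hr m
    rw [← Nat.cast_pow, ← ZMod.intCast_zmod_eq_zero_iff_dvd, Int.cast_sub, sub_eq_zero] at this
    rw [← hn]
    exact_mod_cast this
  obtain ⟨c, hc⟩ := ((Fact.out : p.Prime).odd_of_ne_two hp2).pow (n := m)
  have hu : (u : ZMod (p ^ m.succ))
      = (b * b) ^ p ^ m * ((u⁻¹ ^ c : (ZMod (p ^ m.succ))ˣ) : ZMod (p ^ m.succ)) ^ 2 := by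
    rw [← hpow, hc, ← Units.val_pow_eq_pow_val, ← Units.val_pow_eq_pow_val, ← Units.val_mul]
    congr 1
    group
  rw [hu, mul_pow]
  exact (IsSquare.mul_self _).mul (IsSquare.sq _)

lemma exists_cast_eq_sq_add_sq (hk : k ≠ 0) (t : ZMod (p ^ k)) :
    ∃ a b : ZMod (p ^ k), ((a ^ 2 + b ^ 2 : ZMod (p ^ k)).cast : ZMod p) = t.cast := by
  have hp : p ∣ p ^ k := dvd_pow_self p hk
  obtain ⟨a, b, hab⟩ := ZMod.sq_add_sq p t.cast
  obtain ⟨a, rfl⟩ := ZMod.castHom_surjective hp a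
  obtain ⟨b, rfl⟩ := ZMod.castHom_surjective hp b
  refine ⟨a, b, .trans ?_ hab⟩
  exact (map_add (ZMod.castHom hp _) _ _).trans (by simp only [map_pow])

lemma modEq_two_of_sq_mul_pow_eq_sq_mul_pow {a b n i : ℕ} (ha : a ≠ 0)
    (h : a ^ 2 * p ^ n = b ^ 2 * p ^ i) : n ≡ i [MOD 2] := by
  have hp : p.Prime := Fact.out
  have hb : b ≠ 0 := by
    rintro rfl
    exact (mul_pos (pow_pos ha.bot_lt 2) (pow_pos hp.pos n)).ne' (by simpa using h)
  have := congrArg (padicValNat p) h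
  rw [padicValNat.mul (pow_ne_zero 2 ha) (pow_ne_zero n hp.ne_zero),
    padicValNat.mul (pow_ne_zero 2 hb) (pow_ne_zero i hp.ne_zero), padicValNat.prime_pow,
    padicValNat.prime_pow, padicValNat.pow, padicValNat.pow] at this
  rw [Nat.ModEq]
  lia

lemma card_mul_sum_comp_eq {G H : Type*} [AddGroup G] [Fintype G] [AddGroup H] [Fintype H]
    {S : Type*} [Semiring S] (φ : G →+ H) (hφ : Function.Surjective φ) (f : H → S) :
    Fintype.card H * ∑ g, f (φ g) = Fintype.card G * ∑ h, f h := by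
  have hshift (h : H) : ∑ g, f (φ g + h) = ∑ g, f (φ g) := by
    obtain ⟨g', rfl⟩ := hφ h
    simpa only [Equiv.coe_addRight, map_add] using
      Equiv.sum_comp (Equiv.addRight g') fun g => f (φ g)
  calc Fintype.card H * ∑ g, f (φ g) = ∑ h, ∑ g, f (φ g + h) := by
        simp only [hshift, sum_const, card_univ, nsmul_eq_mul]
    _ = ∑ g, ∑ h, f (φ g + h) := sum_comm
    _ = Fintype.card G * ∑ h, f h := by
        simp only [fun g => Equiv.sum_comp (Equiv.addLeft (φ g)) f, ← Equiv.coe_addLeft, sum_const,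
          card_univ, nsmul_eq_mul]

lemma sum_cast_prime_pow_eq (j : ℕ) (f : ZMod p → ℂ) :
    ∑ t : ZMod (p ^ (j + 1)), f t.cast = p ^ j * ∑ t, f t := by
  have hp : p ∣ p ^ (j + 1) := dvd_pow_self p j.add_one_ne_zero
  have h : (Fintype.card (ZMod p) : ℂ) * ∑ t : ZMod (p ^ (j + 1)), f t.cast
      = Fintype.card (ZMod (p ^ (j + 1))) * ∑ t, f t :=
    card_mul_sum_comp_eq (ZMod.castHom hp (ZMod p)).toAddMonoidHom (ZMod.castHom_surjective hp) f
  simp only [ZMod.card, Nat.cast_pow] at h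
  refine mul_left_cancel₀ (Nat.cast_ne_zero.mpr (Fact.out : p.Prime).ne_zero) (h.trans ?_)
  ring

end PrimePowerModulus

section DirichletGaussSum

open DirichletCharacter

variable {p k : ℕ} [Fact p.Prime]

lemma changeLevel_prime_pow_apply {S : Type*} [CommMonoidWithZero S] (hk : k ≠ 0)
    (η : DirichletCharacter S p) (t : ZMod (p ^ k)) :
    changeLevel (dvd_pow_self p hk) η t = η t.cast := by
  by_cases ht : IsUnit t
  · obtain ⟨u, rfl⟩ := ht
    exact changeLevel_eq_cast_of_dvd η _ u
  · rw [MulChar.map_nonunit _ ht,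
      MulChar.map_nonunit _ fun h => ht ((isUnit_cast_prime_pow_iff hk t).mp h)]

lemma gaussSum_changeLevel_mulShift_eq_zero (hk : k ≠ 0) (η : DirichletCharacter ℂ p)
    {n : ZMod (p ^ k)} (hn : n * p ≠ 0) :
    gaussSum (changeLevel (dvd_pow_self p hk) η) (ZMod.stdAddChar.mulShift n) = 0 := by
  have hnp : ZMod.stdAddChar (n * (p : ZMod (p ^ k))) ≠ 1 := fun h =>
    hn (ZMod.injective_stdAddChar (h.trans (AddChar.map_zero_eq_one _).symm))
  have hshift : ZMod.stdAddChar (n * (p : ZMod (p ^ k))) *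
      gaussSum (changeLevel (dvd_pow_self p hk) η) (ZMod.stdAddChar.mulShift n)
      = gaussSum (changeLevel (dvd_pow_self p hk) η) (ZMod.stdAddChar.mulShift n) := by
    conv_rhs => rw [gaussSum, ← Equiv.sum_comp (Equiv.addRight (p : ZMod (p ^ k)))]
    rw [gaussSum, mul_sum]
    refine sum_congr rfl fun t _ => ?_
    rw [Equiv.coe_addRight, changeLevel_prime_pow_apply hk, changeLevel_prime_pow_apply hk,
      ZMod.cast_add (dvd_pow_self p hk), ZMod.cast_natCast (dvd_pow_self p hk), ZMod.natCast_self,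
      add_zero, AddChar.mulShift_apply, AddChar.mulShift_apply, mul_add, AddChar.map_add_eq_mul]
    ring
  exact (mul_left_eq_self₀.mp hshift).resolve_left hnp

lemma stdAddChar_prime_pow_mul (j : ℕ) (m : ℤ) (t : ZMod (p ^ (j + 1))) :
    (ZMod.stdAddChar (((p ^ j * m : ℤ) : ZMod (p ^ (j + 1))) * t) : ℂ)
      = ZMod.stdAddChar ((m : ZMod p) * t.cast) := by
  obtain ⟨n, rfl⟩ := ZMod.intCast_surjective t
  have hp : (p : ℂ) ≠ 0 := Nat.cast_ne_zero.mpr (Fact.out : p.Prime).ne_zero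
  rw [ZMod.cast_intCast (dvd_pow_self p j.add_one_ne_zero), ← Int.cast_mul, ← Int.cast_mul,
    ZMod.stdAddChar_coe, ZMod.stdAddChar_coe]
  congr 1
  push_cast
  field_simp
  ring

lemma gaussSum_changeLevel_mulShift_prime_pow_mul (j : ℕ) (η : DirichletCharacter ℂ p) (m : ℤ) :
    gaussSum (changeLevel (dvd_pow_self p j.add_one_ne_zero) η)
        (ZMod.stdAddChar.mulShift ((p ^ j * m : ℤ) : ZMod (p ^ (j + 1))))
      = p ^ j * gaussSum η (ZMod.stdAddChar.mulShift m) := by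
  simp only [gaussSum, changeLevel_prime_pow_apply j.add_one_ne_zero, AddChar.mulShift_apply,
    stdAddChar_prime_pow_mul]
  exact sum_cast_prime_pow_eq j fun t => η t * ZMod.stdAddChar ((m : ZMod p) * t)

lemma gaussSum_changeLevel_mulShift_eq_zero_or (j : ℕ) (η : DirichletCharacter ℂ p) (n : ℤ) :
    gaussSum (changeLevel (dvd_pow_self p j.add_one_ne_zero) η) (ZMod.stdAddChar.mulShift n) = 0 ∨
      ∃ m : ℤ, n = p ^ j * m ∧
        gaussSum (changeLevel (dvd_pow_self p j.add_one_ne_zero) η) (ZMod.stdAddChar.mulShift n)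
          = p ^ j * gaussSum η (ZMod.stdAddChar.mulShift m) := by
  by_cases hn : (n : ZMod (p ^ (j + 1))) * p = 0
  · right
    obtain ⟨m, rfl⟩ : (p : ℤ) ^ j ∣ n := by
      have hp : (p : ℤ) ≠ 0 := Nat.cast_ne_zero.mpr (Fact.out : p.Prime).ne_zero
      rw [← Int.cast_natCast p, ← Int.cast_mul, ZMod.intCast_zmod_eq_zero_iff_dvd, Nat.cast_pow,
        pow_succ] at hn
      exact Int.dvd_of_mul_dvd_mul_right hp hn
    exact ⟨m, rfl, gaussSum_changeLevel_mulShift_prime_pow_mul j η m⟩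
  · exact .inl (gaussSum_changeLevel_mulShift_eq_zero j.add_one_ne_zero η hn)

end DirichletGaussSum

section QuadraticCharacter

lemma isQuadratic_pow {R R' : Type*} [CommMonoid R] [CommRing R'] {χ : MulChar R R'}
    (hχ : χ.IsQuadratic) (n : ℕ) : (χ ^ n).IsQuadratic := by
  intro t
  rcases n.even_or_odd with hn | hn
  · rw [hχ.pow_even hn]
    by_cases ht : IsUnit t
    · exact .inr (.inl (MulChar.one_apply ht))
    · exact .inl (MulChar.map_nonunit _ ht)
  · rw [hχ.pow_odd hn]
    exact hχ t

variable {F : Type*} [Field F] [Fintype F] {χ : MulChar F ℂ} {ψ : AddChar F ℂ}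

lemma norm_gaussSum_sq (hχ : χ ≠ 1) (hψ : ψ.IsPrimitive) :
    ‖gaussSum χ ψ‖ ^ 2 = Fintype.card F := by
  have h : gaussSum χ ψ * starRingEnd ℂ (gaussSum χ ψ) = Fintype.card F := by
    rw [starRingEnd_apply, star_gaussSum_eq, gaussSum_mul_gaussSum_eq_card hχ hψ]
  rw [Complex.mul_conj'] at h
  exact_mod_cast h

lemma gaussSum_one_left_of_isPrimitive (hψ : ψ.IsPrimitive) : gaussSum 1 ψ = -1 :=
  gaussSum_one_left (by simpa only [AddChar.mulShift_one] using hψ one_ne_zero)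

lemma exists_int_gaussSum_mulShift (hχ : χ.IsQuadratic) (hψ : ψ.IsPrimitive) (a : F) :
    ∃ z : ℤ, gaussSum χ (ψ.mulShift a) = z * gaussSum χ ψ := by
  rcases eq_or_ne a 0 with rfl | ha
  · rw [AddChar.mulShift_zero]
    by_cases h1 : χ = 1
    · subst h1
      exact ⟨-Nat.card Fˣ, by simp [gaussSum_one_one, gaussSum_one_left_of_isPrimitive hψ]⟩
    · exact ⟨0, by rw [gaussSum_one_right h1, Int.cast_zero, zero_mul]⟩
  · have h := gaussSum_mulShift_eq χ ψ (Units.mk0 a ha)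
    rw [hχ.inv, Units.val_mk0] at h
    rcases hχ a with h' | h' | h'
    · exact ⟨0, by simp [h, h']⟩
    · exact ⟨1, by simp [h, h']⟩
    · exact ⟨-1, by simp [h, h']⟩

lemma norm_gaussSum_one_mulShift_le [DecidableEq F] (hψ : ψ.IsPrimitive) (a : F) :
    ‖gaussSum (1 : MulChar F ℂ) (ψ.mulShift a)‖ ≤ if a = 0 then (Fintype.card F : ℝ) else 1 := by
  split_ifs with ha
  · rw [ha, AddChar.mulShift_zero, gaussSum_one_one, Complex.norm_natCast, Nat.cast_le,
      ← Nat.card_eq_fintype_card]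
    exact Nat.card_le_card_of_injective _ Units.val_injective
  · have h := gaussSum_mulShift (1 : MulChar F ℂ) ψ (Units.mk0 a ha)
    rw [MulChar.one_apply_coe, one_mul, Units.val_mk0, gaussSum_one_left_of_isPrimitive hψ] at h
    rw [h, norm_neg, norm_one]

lemma norm_gaussSum_mulShift_sq [DecidableEq F] (hχ : χ ≠ 1) (hψ : ψ.IsPrimitive) (a : F) :
    ‖gaussSum χ (ψ.mulShift a)‖ ^ 2 = if a = 0 then (0 : ℝ) else Fintype.card F := by
  split_ifs with ha
  · rw [ha, AddChar.mulShift_zero, gaussSum_one_right hχ, norm_zero, zero_pow two_ne_zero]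
  · refine norm_gaussSum_sq hχ fun b hb => ?_
    rw [AddChar.mulShift_mulShift]
    exact hψ (mul_ne_zero ha hb)

end QuadraticCharacter

section GaussSumBounds

open DirichletCharacter

variable {p : ℕ} [Fact p.Prime]

lemma exists_int_gaussSum_changeLevel_mulShift (j : ℕ) {η : DirichletCharacter ℂ p}
    (hη : η.IsQuadratic) (n : ZMod (p ^ (j + 1))) :
    ∃ z : ℤ, gaussSum (changeLevel (dvd_pow_self p j.add_one_ne_zero) η)
      (ZMod.stdAddChar.mulShift n) = z * gaussSum η ZMod.stdAddChar := by
  obtain ⟨n, rfl⟩ := ZMod.intCast_surjective n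
  rcases gaussSum_changeLevel_mulShift_eq_zero_or j η n with h | ⟨m, -, h⟩
  · exact ⟨0, by rw [h, Int.cast_zero, zero_mul]⟩
  · obtain ⟨z, hz⟩ := exists_int_gaussSum_mulShift hη (ZMod.isPrimitive_stdAddChar p) m
    exact ⟨p ^ j * z, by rw [h, hz]; push_cast; ring⟩

lemma gcd_prime_pow_mul_prime_pow_succ (j : ℕ) (m : ℤ) :
    (p ^ j * m).gcd (p ^ (j + 1)) = p ^ j * if (m : ZMod p) = 0 then p else 1 := by
  rw [pow_succ, Int.gcd_mul_left, Int.natAbs_pow, Int.natAbs_natCast]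
  congr 1
  split_ifs with hm
  · have hdvd := (ZMod.intCast_zmod_eq_zero_iff_dvd m p).mp hm
    exact_mod_cast Int.gcd_eq_right (Int.natCast_nonneg p) hdvd
  · rw [ZMod.intCast_zmod_eq_zero_iff_dvd,
      ← (Nat.prime_iff_prime_int.mp Fact.out).coprime_iff_not_dvd] at hm
    exact Int.isCoprime_iff_gcd_eq_one.mp hm.symm

lemma norm_gaussSum_changeLevel_one_mulShift_le (j : ℕ) (n : ℤ) :
    ‖gaussSum (changeLevel (dvd_pow_self p j.add_one_ne_zero) 1) (ZMod.stdAddChar.mulShift n)‖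
      ≤ n.gcd (p ^ (j + 1)) := by
  rcases gaussSum_changeLevel_mulShift_eq_zero_or j (1 : DirichletCharacter ℂ p) n
    with h | ⟨m, rfl, h⟩
  · rw [h, norm_zero]
    exact Nat.cast_nonneg _
  · rw [h, norm_mul, norm_pow, Complex.norm_natCast, gcd_prime_pow_mul_prime_pow_succ,
      Nat.cast_mul, Nat.cast_pow, Nat.cast_ite, Nat.cast_one]
    have := norm_gaussSum_one_mulShift_le (ZMod.isPrimitive_stdAddChar p) (m : ZMod p)
    rw [ZMod.card] at this
    gcongr

lemma norm_gaussSum_changeLevel_mulShift_sq_le (j : ℕ) {η : DirichletCharacter ℂ p} (hη : η ≠ 1)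
    (n : ℤ) :
    ‖gaussSum (changeLevel (dvd_pow_self p j.add_one_ne_zero) η)
        (ZMod.stdAddChar.mulShift n)‖ ^ 2 ≤ p ^ (j + 1) * n.gcd (p ^ (j + 1)) := by
  rcases gaussSum_changeLevel_mulShift_eq_zero_or j η n with h | ⟨m, rfl, h⟩
  · rw [h, norm_zero, zero_pow two_ne_zero]
    positivity
  · rw [h, norm_mul, norm_pow, Complex.norm_natCast, mul_pow,
      norm_gaussSum_mulShift_sq hη (ZMod.isPrimitive_stdAddChar p), ZMod.card,
      gcd_prime_pow_mul_prime_pow_succ]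
    split_ifs
    · rw [mul_zero]
      positivity
    · apply le_of_eq
      push_cast
      ring

end GaussSumBounds

section TwistedGaussSum

variable {R V : Type*} [CommRing R] [Fintype R]

lemma norm_gaussSum_mulShift_mul (χ : MulChar R ℂ) (ψ : AddChar R ℂ) {a : R} (ha : IsUnit a)
    (b : R) : ‖gaussSum χ (ψ.mulShift (a * b))‖ = ‖gaussSum χ (ψ.mulShift b)‖ := by
  obtain ⟨a, rfl⟩ := ha
  have hχ : ‖χ a‖ = 1 :=
    ((χ.toMonoidHom.comp (Units.coeHom R)).isOfFinOrder (isOfFinOrder_of_finite a)).norm_eq_one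
  rw [← gaussSum_mulShift χ (ψ.mulShift b) a, norm_mul, hχ, one_mul, AddChar.mulShift_mulShift,
    mul_comm]

variable [Fintype Rˣ]

lemma gaussSum_eq_sum_units {S : Type*} [CommRing S] (χ : MulChar R S)
    (ψ : AddChar R S) :
    gaussSum χ ψ = ∑ t : Rˣ, χ t * ψ t := by
  refine (Fintype.sum_of_injective _ Units.val_injective _ _ (fun t ht => ?_) fun _ => rfl).symm
  rw [χ.map_nonunit ht, zero_mul]

variable [AddCommGroup V] [Module R V] [Fintype V] {ψ : AddChar R ℂ} {Q : QuadraticForm R V}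
  {χ : MulChar R ℂ}

lemma card_units_mul_quadGaussSum (hχ : χ.IsQuadratic)
    (h : ∀ t : Rˣ, quadGaussSum ψ ((t : R) • Q) = χ t * quadGaussSum ψ Q) :
    Fintype.card Rˣ * quadGaussSum ψ Q = ∑ x, gaussSum χ (ψ.mulShift (Q x)) := by
  have hsq (t : Rˣ) : χ t * χ t = 1 := by
    rw [← MulChar.mul_apply, ← pow_two, hχ.sq_eq_one, MulChar.one_apply_coe]
  calc Fintype.card Rˣ * quadGaussSum ψ Q
      = ∑ t : Rˣ, χ t * quadGaussSum ψ ((t : R) • Q) := by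
        simp only [h, ← mul_assoc, hsq, one_mul, sum_const, card_univ, nsmul_eq_mul]
    _ = ∑ x, gaussSum χ (ψ.mulShift (Q x)) := by
        simp only [quadGaussSum, mul_sum, gaussSum_eq_sum_units, AddChar.mulShift_apply,
          _root_.smul_apply, smul_eq_mul, mul_comm (Q _)]
        exact sum_comm

lemma sum_units_sum_mul_add_polar_eq
    (h : ∀ t : Rˣ, quadGaussSum ψ ((t : R) • Q) = χ t * quadGaussSum ψ Q) (w : V) :
    ∑ t : Rˣ, ∑ x, ψ (t * Q x + QuadraticMap.polar Q x w)
      = gaussSum χ (ψ.mulShift (-Q w)) * quadGaussSum ψ Q := by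
  calc ∑ t : Rˣ, ∑ x, ψ (t * Q x + QuadraticMap.polar Q x w)
      = ∑ t : Rˣ, ψ (t * -Q w) * quadGaussSum ψ ((t : R) • Q) := by
        simp only [sum_mul_add_polar_eq]
        exact Equiv.sum_comp (Equiv.inv Rˣ) fun t : Rˣ =>
          ψ (t * -Q w) * quadGaussSum ψ ((t : R) • Q)
    _ = gaussSum χ (ψ.mulShift (-Q w)) * quadGaussSum ψ Q := by
        simp only [h, gaussSum_eq_sum_units, AddChar.mulShift_apply, sum_mul]
        exact sum_congr rfl fun t _ => by rw [mul_comm (-Q w)]; ring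

end TwistedGaussSum

section QuadraticGaussSumPrimePow

open DirichletCharacter

variable {p k : ℕ} [Fact p.Prime] {V : Type*} [AddCommGroup V] [Module (ZMod (p ^ k)) V]
  [Fintype V]

/-- The Legendre symbol modulo `p` as a Dirichlet character with complex values. -/
def legendreChar (p : ℕ) [Fact p.Prime] : DirichletCharacter ℂ p :=
  (quadraticChar (ZMod p)).ringHomComp (Int.castRingHom ℂ)

lemma isQuadratic_legendreChar : (legendreChar p).IsQuadratic :=
  (quadraticChar_isQuadratic _).comp _

lemma legendreChar_ne_one (hp2 : p ≠ 2) : legendreChar p ≠ 1 :=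
  (MulChar.ringHomComp_ne_one_iff Int.cast_injective).mpr
    (quadraticChar_ne_one ((ZMod.ringChar_zmod_n p).trans_ne hp2))

lemma legendreChar_apply_eq_one_iff {t : ZMod p} (ht : t ≠ 0) :
    legendreChar p t = 1 ↔ IsSquare t := by
  rw [legendreChar, MulChar.ringHomComp_apply, Int.coe_castRingHom, Int.cast_eq_one,
    quadraticChar_one_iff_isSquare ht]

lemma isSquare_mul_of_legendreChar_cast_eq (hp2 : p ≠ 2) (hk : k ≠ 0) {t t' : ZMod (p ^ k)}
    (ht : IsUnit t) (ht' : IsUnit t') (h : legendreChar p t.cast = legendreChar p t'.cast) :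
    IsSquare (t * t') := by
  refine isSquare_of_isSquare_cast hp2 hk (ht.mul ht') ?_
  have hu := (isUnit_cast_prime_pow_iff hk t').mpr ht'
  have hu0 := (((isUnit_cast_prime_pow_iff hk t).mpr ht).mul hu).ne_zero
  rw [ZMod.cast_mul (dvd_pow_self p hk), ← legendreChar_apply_eq_one_iff hu0, map_mul, h,
    ← MulChar.mul_apply, ← pow_two, isQuadratic_legendreChar.sq_eq_one, MulChar.one_apply hu]

lemma quadGaussSum_smul_eq_of_legendreChar_cast_eq (hp2 : p ≠ 2) (hk : k ≠ 0)
    (ψ : AddChar (ZMod (p ^ k)) ℂ) (Q : QuadraticForm (ZMod (p ^ k)) V) {t t' : ZMod (p ^ k)}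
    (ht : IsUnit t) (ht' : IsUnit t') (h : legendreChar p t.cast = legendreChar p t'.cast) :
    quadGaussSum ψ (t • Q) = quadGaussSum ψ (t' • Q) := by
  obtain ⟨r, hr⟩ := isSquare_mul_of_legendreChar_cast_eq hp2 hk ht ht' h
  obtain ⟨r, rfl⟩ : IsUnit r := isUnit_of_mul_isUnit_left (hr ▸ ht.mul ht')
  obtain ⟨t', rfl⟩ := ht'
  have : t = t' * ((r * t'⁻¹ : (ZMod (p ^ k))ˣ) : ZMod (p ^ k)) ^ 2 := by
    rw [Units.val_mul]
    linear_combination ((t' : ZMod (p ^ k)) * (t'⁻¹ : (ZMod (p ^ k))ˣ) ^ 2) * hr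
      - t * (1 + t' * (t'⁻¹ : (ZMod (p ^ k))ˣ)) * t'.mul_inv
  rw [this]
  exact quadGaussSum_congr ψ (equivalent_mul_sq_smul Q t' _)

lemma quadGaussSum_smul_sq (hp2 : p ≠ 2) (hk : k ≠ 0) (ψ : AddChar (ZMod (p ^ k)) ℂ)
    (Q : QuadraticForm (ZMod (p ^ k)) V) {t : ZMod (p ^ k)} (ht : IsUnit t) :
    quadGaussSum ψ (t • Q) ^ 2 = quadGaussSum ψ Q ^ 2 := by
  obtain ⟨a, b, hab⟩ := exists_cast_eq_sq_add_sq hk t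
  have h : IsUnit (a ^ 2 + b ^ 2) := by
    rwa [← isUnit_cast_prime_pow_iff hk, hab, isUnit_cast_prime_pow_iff hk]
  rw [quadGaussSum_smul_eq_of_legendreChar_cast_eq hp2 hk ψ Q ht h (by rw [hab]),
    quadGaussSum_add_sq_smul_sq ψ Q h]

lemma legendreChar_cast_eq_one_or_neg_one (hk : k ≠ 0) {t : ZMod (p ^ k)} (ht : IsUnit t) :
    legendreChar p t.cast = 1 ∨ legendreChar p t.cast = -1 := by
  refine (isQuadratic_legendreChar (t.cast : ZMod p)).resolve_left fun h => ?_
  exact ((isUnit_cast_prime_pow_iff hk t).mpr ht).map (legendreChar p) |>.ne_zero h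

lemma exists_quadGaussSum_units_smul_eq (hp2 : p ≠ 2) (hk : k ≠ 0) (ψ : AddChar (ZMod (p ^ k)) ℂ)
    (Q : QuadraticForm (ZMod (p ^ k)) V) :
    ∃ i ≤ 1, ∀ t : (ZMod (p ^ k))ˣ, quadGaussSum ψ ((t : ZMod (p ^ k)) • Q)
      = changeLevel (dvd_pow_self p hk) (legendreChar p ^ i) t * quadGaussSum ψ Q := by
  by_cases h : ∀ t : (ZMod (p ^ k))ˣ, quadGaussSum ψ ((t : ZMod (p ^ k)) • Q) = quadGaussSum ψ Q
  · exact ⟨0, zero_le_one, fun t => by rw [h, pow_zero, map_one, MulChar.one_apply_coe, one_mul]⟩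
  push Not at h
  obtain ⟨t₀, ht₀⟩ := h
  have hone {t : ZMod (p ^ k)} (ht : IsUnit t) (h : legendreChar p t.cast = 1) :
      quadGaussSum ψ (t • Q) = quadGaussSum ψ Q := by
    have hone' : legendreChar p (1 : ZMod (p ^ k)).cast = 1 := by
      rw [ZMod.cast_one (dvd_pow_self p hk), map_one]
    simpa only [one_smul] using
      quadGaussSum_smul_eq_of_legendreChar_cast_eq hp2 hk ψ Q ht isUnit_one (h.trans hone'.symm)
  have hχt₀ : legendreChar p (t₀ : ZMod (p ^ k)).cast = -1 :=
    (legendreChar_cast_eq_one_or_neg_one hk t₀.isUnit).resolve_left (ht₀ ∘ hone t₀.isUnit)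
  have hGt₀ : quadGaussSum ψ ((t₀ : ZMod (p ^ k)) • Q) = -quadGaussSum ψ Q :=
    (sq_eq_sq_iff_eq_or_eq_neg.mp (quadGaussSum_smul_sq hp2 hk ψ Q t₀.isUnit)).resolve_left ht₀
  refine ⟨1, le_rfl, fun t => ?_⟩
  rw [pow_one, changeLevel_prime_pow_apply hk]
  rcases legendreChar_cast_eq_one_or_neg_one hk t.isUnit with ht | ht
  · rw [hone t.isUnit ht, ht, one_mul]
  · rw [quadGaussSum_smul_eq_of_legendreChar_cast_eq hp2 hk ψ Q t.isUnit t₀.isUnit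
      (ht.trans hχt₀.symm), hGt₀, ht, neg_one_mul]

lemma exists_int_card_units_mul_quadGaussSum_eq (hk : k ≠ 0) {η : DirichletCharacter ℂ p}
    (hη : η.IsQuadratic) {Q : QuadraticForm (ZMod (p ^ k)) V}
    (h : ∀ t : (ZMod (p ^ k))ˣ, quadGaussSum ZMod.stdAddChar ((t : ZMod (p ^ k)) • Q)
      = changeLevel (dvd_pow_self p hk) η t * quadGaussSum ZMod.stdAddChar Q) :
    ∃ z : ℤ, Fintype.card (ZMod (p ^ k))ˣ * quadGaussSum ZMod.stdAddChar Q
      = z * gaussSum η ZMod.stdAddChar := by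
  obtain ⟨j, rfl⟩ := Nat.exists_eq_succ_of_ne_zero hk
  choose z hz using exists_int_gaussSum_changeLevel_mulShift j hη
  have hη' : (changeLevel (dvd_pow_self p hk) η).IsQuadratic := fun t => by
    rw [changeLevel_prime_pow_apply hk]
    exact hη _
  refine ⟨∑ x, z (Q x), ?_⟩
  rw [card_units_mul_quadGaussSum hη' h, Int.cast_sum, sum_mul]
  exact sum_congr rfl fun x _ => hz (Q x)

lemma norm_gaussSum_legendreChar_pow_sq (hp2 : p ≠ 2) {i : ℕ} (hi : i ≤ 1) :
    ‖gaussSum (legendreChar p ^ i) ZMod.stdAddChar‖ ^ 2 = p ^ i := by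
  interval_cases i
  · rw [pow_zero, gaussSum_one_left_of_isPrimitive (ZMod.isPrimitive_stdAddChar p), norm_neg,
      norm_one, one_pow, pow_zero]
  · have := norm_gaussSum_sq (χ := legendreChar p) (legendreChar_ne_one hp2)
      (ZMod.isPrimitive_stdAddChar p)
    rw [pow_one, this, ZMod.card, pow_one]

theorem quadGaussSum_units_smul (hp2 : p ≠ 2) (hk : k ≠ 0)
    {Q : QuadraticForm (ZMod (p ^ k)) V} (hQ : Q.polarBilin.SeparatingLeft) {n : ℕ}
    (hn : Fintype.card V = p ^ n) (t : (ZMod (p ^ k))ˣ) :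
    quadGaussSum ZMod.stdAddChar ((t : ZMod (p ^ k)) • Q)
      = changeLevel (dvd_pow_self p hk) (legendreChar p ^ n) t *
        quadGaussSum ZMod.stdAddChar Q := by
  obtain ⟨i, hi, h⟩ := exists_quadGaussSum_units_smul_eq hp2 hk ZMod.stdAddChar Q
  obtain ⟨z, hz⟩ :=
    exists_int_card_units_mul_quadGaussSum_eq hk (isQuadratic_pow isQuadratic_legendreChar i) h
  have hsq : Fintype.card (ZMod (p ^ k))ˣ ^ 2 * p ^ n = z.natAbs ^ 2 * p ^ i := by
    have := congrArg (‖·‖ ^ 2) hz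
    simp only [norm_mul, mul_pow, Complex.norm_natCast, norm_gaussSum_legendreChar_pow_sq hp2 hi,
      norm_quadGaussSum_sq (ZMod.isPrimitive_stdAddChar _) hQ, hn, Complex.norm_intCast,
      ← Int.cast_abs, Int.abs_eq_natAbs, Int.cast_natCast] at this
    exact_mod_cast this
  -- The exponents of `p` on the two sides have the same parity as `n` and `i`.
  have hni : n % 2 = i % 2 := modEq_two_of_sq_mul_pow_eq_sq_mul_pow Fintype.card_ne_zero hsq
  rw [h, pow_eq_pow_mod n isQuadratic_legendreChar.sq_eq_one, hni,
    ← pow_eq_pow_mod i isQuadratic_legendreChar.sq_eq_one]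

end QuadraticGaussSumPrimePow

section MatrixForm

variable {ι R : Type*} [Fintype ι] [DecidableEq ι] [CommRing R] {N : Matrix ι ι R}

lemma toQuadraticForm'_apply (N : Matrix ι ι R) (x : ι → R) :
    N.toQuadraticForm' x = x ⬝ᵥ N *ᵥ x :=
  Matrix.toLinearMap₂'_apply' N x x

lemma polar_toQuadraticForm' (hN : N.IsSymm) (x y : ι → R) :
    QuadraticMap.polar N.toQuadraticForm' x y = 2 * (x ⬝ᵥ N *ᵥ y) := by
  rw [Matrix.toQuadraticForm', LinearMap.BilinMap.polar_toQuadraticMap,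
    Matrix.toLinearMap₂'_apply', Matrix.toLinearMap₂'_apply', Matrix.dotProduct_mulVec y,
    ← Matrix.mulVec_transpose, hN.eq, dotProduct_comm _ x, two_mul]

lemma mulVec_adjugate_mulVec (N : Matrix ι ι R) (v : ι → R) :
    N *ᵥ N.adjugate *ᵥ v = N.det • v := by
  rw [Matrix.mulVec_mulVec, Matrix.mul_adjugate, Matrix.smul_mulVec, Matrix.one_mulVec]

lemma separatingLeft_polarBilin_toQuadraticForm' (hN : N.IsSymm) (hd : IsUnit (2 * N.det)) :
    N.toQuadraticForm'.polarBilin.SeparatingLeft := by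
  intro x hx
  refine dotProduct_eq_zero x fun y => hd.mul_right_eq_zero.mp ?_
  have h := hx (N.adjugate *ᵥ y)
  rwa [QuadraticMap.polarBilin_apply_apply, polar_toQuadraticForm' hN, mulVec_adjugate_mulVec,
    dotProduct_smul, smul_eq_mul, ← mul_assoc] at h

lemma exists_polar_eq_dotProduct (hN : N.IsSymm) (hd : IsUnit (2 * N.det)) (v : ι → R) :
    ∃ w, (∀ x, QuadraticMap.polar N.toQuadraticForm' x w = x ⬝ᵥ v) ∧
      ∃ a, IsUnit a ∧ -N.toQuadraticForm' w = a * (v ⬝ᵥ N.adjugate *ᵥ v) := by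
  obtain ⟨e, he⟩ := hd.exists_right_inv
  have hNw : N *ᵥ (e • N.adjugate *ᵥ v) = (e * N.det) • v := by
    rw [Matrix.mulVec_smul, mulVec_adjugate_mulVec, smul_smul]
  refine ⟨e • N.adjugate *ᵥ v, fun x => ?_, -(e * e * N.det), ?_, ?_⟩
  · rw [polar_toQuadraticForm' hN, hNw, dotProduct_smul, smul_eq_mul]
    linear_combination (x ⬝ᵥ v) * he
  · have hu : IsUnit e := .of_mul_eq_one _ ((mul_comm _ _).trans he)
    exact ((hu.mul hu).mul (isUnit_of_mul_isUnit_right hd)).neg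
  · rw [toQuadraticForm'_apply, hNw, smul_dotProduct, dotProduct_smul, dotProduct_comm _ v,
      smul_eq_mul, smul_eq_mul]
    ring

lemma intCast_dotProduct_adjugate_mulVec (M : Matrix ι ι ℤ) (u v : ι → ℤ) :
    ((u ⬝ᵥ M.adjugate *ᵥ v : ℤ) : R)
      = (fun i => (u i : R)) ⬝ᵥ (M.map (Int.cast : ℤ → R)).adjugate *ᵥ fun i => (v i : R) := by
  have hadj : M.adjugate.map (Int.cast : ℤ → R) = (M.map Int.cast).adjugate :=
    (Int.castRingHom R).map_adjugate M
  rw [← hadj]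
  refine ((Int.castRingHom R).map_dotProduct _ _).trans (congrArg _ (funext fun i => ?_))
  exact (Int.castRingHom R).map_mulVec _ _ i

end MatrixForm

section PrimitiveResidues

lemma isCoprime_natCast_iff_isUnit_gcd {R : Type*} [CommRing R] (a b : ℕ) :
    IsCoprime (a : R) (b : R) ↔ IsUnit ((a.gcd b : ℕ) : R) := by
  refine ⟨fun h => h.isUnit_of_dvd' (Nat.cast_dvd_cast (Nat.gcd_dvd_left a b))
    (Nat.cast_dvd_cast (Nat.gcd_dvd_right a b)), fun h => ?_⟩
  obtain ⟨r, hr⟩ := h.exists_left_inv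
  have hgcd := congrArg (Int.cast : ℤ → R) (Nat.gcd_eq_gcd_ab a b)
  push_cast at hgcd
  exact ⟨r * a.gcdA b, r * a.gcdB b, by linear_combination hr - r * hgcd⟩

lemma isCoprime_and_mul_eq_mul_iff {R : Type*} [CommRing R] {c₁ c₂ : R} (hc : IsCoprime c₁ c₂)
    (a₁ a₂ : R) :
    IsCoprime a₁ a₂ ∧ c₁ * a₂ = c₂ * a₁ ↔ ∃ t : Rˣ, (t * c₁, t * c₂) = (a₁, a₂) := by
  obtain ⟨x, y, hxy⟩ := hc
  simp only [Prod.mk.injEq]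
  constructor
  · rintro ⟨⟨z, w, hzw⟩, h⟩
    have h₁ : (x * a₁ + y * a₂) * c₁ = a₁ := by linear_combination a₁ * hxy + y * h
    have h₂ : (x * a₁ + y * a₂) * c₂ = a₂ := by linear_combination a₂ * hxy - x * h
    exact ⟨.mkOfMulEqOne (x * a₁ + y * a₂) (z * c₁ + w * c₂)
      (by linear_combination z * h₁ + w * h₂ + hzw), h₁, h₂⟩
  · rintro ⟨t, rfl, rfl⟩
    refine ⟨⟨x * (t⁻¹ : Rˣ), y * (t⁻¹ : Rˣ), ?_⟩, by ring⟩
    linear_combination hxy + (x * c₁ + y * c₂) * t.inv_mul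

lemma units_mul_pair_injective {R : Type*} [CommRing R] {c₁ c₂ : R} (hc : IsCoprime c₁ c₂) :
    Function.Injective fun t : Rˣ => ((t : R) * c₁, (t : R) * c₂) := by
  obtain ⟨x, y, hxy⟩ := hc
  intro t t' h
  rw [Prod.mk.injEq] at h
  refine Units.ext ?_
  linear_combination x * h.1 + y * h.2 - ((t : R) - t') * hxy

variable {q : ℕ} [NeZero q] {S : Type*} [AddCommMonoid S]

open Classical in
lemma sum_residues_filter_eq (c : ℤ × ℤ) (f : ZMod q × ZMod q → S) :
    ∑ a ∈ (residues q).filter (fun a => (q : ℤ) ∣ c.1 * a.2 - c.2 * a.1), f (a.1, a.2)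
      = ∑ a with IsCoprime a.1 a.2 ∧ (c.1 : ZMod q) * a.2 = c.2 * a.1, f a := by
  have hmem (a : ℕ × ℕ) : a ∈ (residues q).filter (fun a => (q : ℤ) ∣ c.1 * a.2 - c.2 * a.1) ↔
      (a.1 < q ∧ a.2 < q) ∧ IsCoprime (a.1 : ZMod q) a.2 ∧ (c.1 : ZMod q) * a.2 = c.2 * a.1 := by
    rw [isCoprime_natCast_iff_isUnit_gcd, ZMod.isUnit_iff_coprime, ← sub_eq_zero]
    simp [residues, ← ZMod.intCast_zmod_eq_zero_iff_dvd, and_assoc, Nat.Coprime]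
  refine sum_nbij' (fun a : ℕ × ℕ => ((a.1 : ZMod q), (a.2 : ZMod q)))
    (fun a : ZMod q × ZMod q => (a.1.val, a.2.val)) (fun a ha => ?_) (fun a ha => ?_)
    (fun a ha => ?_) (fun a _ => ?_) fun a _ => rfl
  · exact mem_filter.mpr ⟨mem_univ _, ((hmem a).mp ha).2⟩
  · rw [hmem]
    simpa [ZMod.val_lt] using ha
  · obtain ⟨⟨h₁, h₂⟩, -⟩ := (hmem a).mp ha
    exact Prod.ext (ZMod.val_cast_of_lt h₁) (ZMod.val_cast_of_lt h₂)
  · exact Prod.ext (ZMod.natCast_zmod_val _) (ZMod.natCast_zmod_val _)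

lemma sum_residues_filter_eq_sum_units {c : ℤ × ℤ} (hc : Int.gcd c.1 c.2 = 1)
    (f : ZMod q × ZMod q → S) :
    ∑ a ∈ (residues q).filter (fun a => (q : ℤ) ∣ c.1 * a.2 - c.2 * a.1), f (a.1, a.2)
      = ∑ t : (ZMod q)ˣ, f (t * c.1, t * c.2) := by
  classical
  have hc' : IsCoprime (c.1 : ZMod q) c.2 := (Int.isCoprime_iff_gcd_eq_one.mpr hc).intCast
  rw [sum_residues_filter_eq,
    ← sum_image (f := f) (g := fun t : (ZMod q)ˣ => ((t : ZMod q) * c.1, (t : ZMod q) * c.2))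
      (units_mul_pair_injective hc').injOn]
  refine sum_congr (Finset.ext fun a => ?_) fun _ _ => rfl
  simp only [mem_filter, mem_univ, true_and, mem_image]
  exact isCoprime_and_mul_eq_mul_iff hc' a.1 a.2

end PrimitiveResidues

section ReductionModulo

variable {s : ℕ} {R : Type*} [CommRing R]

lemma toQuadraticForm'_map_intCast (M : Matrix (Fin s) (Fin s) ℤ) (x : Fin s → R) :
    (M.map (Int.cast : ℤ → R)).toQuadraticForm' x = quadEval M x := by
  simp only [toQuadraticForm'_apply, quadEval, dotProduct, mulVec, mul_sum, Matrix.map_apply]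
  exact sum_congr rfl fun i _ => sum_congr rfl fun j _ => by ring

lemma intCast_quadEval (M : Matrix (Fin s) (Fin s) ℤ) (b : Fin s → ℤ) :
    ((quadEval M b : ℤ) : R) = quadEval M (fun i => (b i : R)) := by
  simp only [quadEval, Int.cast_sum, Int.cast_mul, Int.cast_id]

lemma quadEval_smul_add_smul (m n : ℤ) (M₁ M₂ : Matrix (Fin s) (Fin s) ℤ) (x : Fin s → R) :
    quadEval (m • M₁ + n • M₂) x = m * quadEval M₁ x + n * quadEval M₂ x := by
  simp only [quadEval, mul_sum, ← sum_add_distrib, Matrix.add_apply, Matrix.smul_apply, smul_eq_mul,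
    Int.cast_add, Int.cast_mul]
  exact sum_congr rfl fun i _ => sum_congr rfl fun j _ => by ring

variable {q : ℕ} [NeZero q]

lemma eqc_eq_stdAddChar (n : ℤ) : eqc q n = ZMod.stdAddChar (n : ZMod q) := by
  rw [ZMod.stdAddChar_coe, eqc, e2pi]
  congr 1
  push_cast
  ring

lemma sum_piFinset_range_eq {ι S : Type*} [Fintype ι] [DecidableEq ι] [AddCommMonoid S]
    (f : (ι → ZMod q) → S) :
    ∑ b ∈ Fintype.piFinset (fun _ : ι => Finset.range q), f (fun i => (b i : ZMod q))
      = ∑ x : ι → ZMod q, f x := by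
  refine sum_nbij' (fun b i => (b i : ZMod q)) (fun x i => (x i).val) (fun _ _ => mem_univ _)
    (fun x _ => ?_) (fun b hb => ?_) (fun x _ => ?_) fun _ _ => rfl
  · exact Fintype.mem_piFinset.mpr fun i => Finset.mem_range.mpr (ZMod.val_lt (x i))
  · exact funext fun i => ZMod.val_cast_of_lt (Finset.mem_range.mp (Fintype.mem_piFinset.mp hb i))
  · exact funext fun i => ZMod.natCast_zmod_val (x i)

lemma Sq_one_eq_sum_units (M₁ M₂ : Matrix (Fin s) (Fin s) ℤ) {c : ℤ × ℤ}
    (hc : Int.gcd c.1 c.2 = 1) (u : Fin s → ℤ) :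
    Sq s M₁ M₂ q 1 c u = ∑ t : (ZMod q)ˣ, ∑ x : Fin s → ZMod q,
      (ZMod.stdAddChar
        ((t : ZMod q) * ((c.1 • M₁ + c.2 • M₂).map (Int.cast : ℤ → ZMod q)).toQuadraticForm' x
          + x ⬝ᵥ (fun i => (u i : ZMod q))) : ℂ) := by
  have h := sum_residues_filter_eq_sum_units (q := q) hc fun a => ∑ x : Fin s → ZMod q,
    ZMod.stdAddChar (a.1 * quadEval M₁ x + a.2 * quadEval M₂ x + x ⬝ᵥ fun i => (u i : ZMod q))
  simp only [Sq, Nat.cast_one, one_mul]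
  refine Eq.trans (sum_congr rfl fun a _ => ?_) (h.trans ?_)
  · rw [← sum_piFinset_range_eq]
    refine sum_congr rfl fun b _ => ?_
    rw [eqc_eq_stdAddChar]
    push_cast [intCast_quadEval]
    rfl
  · refine sum_congr rfl fun t _ => sum_congr rfl fun x _ => ?_
    rw [toQuadraticForm'_map_intCast, quadEval_smul_add_smul, mul_add, mul_assoc, mul_assoc]

end ReductionModulo

section PrimePowerBounds

open DirichletCharacter

variable {s p k : ℕ} [Fact p.Prime]

lemma norm_quadGaussSum_stdAddChar_prime_pow
    {Q : QuadraticForm (ZMod (p ^ k)) (Fin s → ZMod (p ^ k))}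
    (hQ : Q.polarBilin.SeparatingLeft) :
    ‖quadGaussSum ZMod.stdAddChar Q‖ = (p : ℝ) ^ ((s : ℝ) * k / 2) := by
  refine (pow_left_inj₀ (norm_nonneg _) (by positivity) two_ne_zero).mp ?_
  rw [norm_quadGaussSum_sq (ZMod.isPrimitive_stdAddChar _) hQ, Fintype.card_fun, ZMod.card,
    Fintype.card_fin, ← Real.rpow_mul_natCast p.cast_nonneg, Nat.cast_two,
    div_mul_cancel₀ _ two_ne_zero, Nat.cast_pow, Nat.cast_pow, ← pow_mul, ← Real.rpow_natCast]
  push_cast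
  rw [mul_comm]

lemma norm_sum_units_sum_stdAddChar_prime_pow (hp2 : p ≠ 2) (hk : k ≠ 0)
    {N : Matrix (Fin s) (Fin s) (ZMod (p ^ k))} (hN : N.IsSymm) (hd : IsUnit (2 * N.det))
    (v : Fin s → ZMod (p ^ k)) :
    ‖∑ t : (ZMod (p ^ k))ˣ, ∑ x, (ZMod.stdAddChar
        ((t : ZMod (p ^ k)) * N.toQuadraticForm' x + x ⬝ᵥ v) : ℂ)‖
      = (p : ℝ) ^ ((s : ℝ) * k / 2) *
        ‖gaussSum (changeLevel (dvd_pow_self p hk) (legendreChar p ^ (k * s)))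
          (ZMod.stdAddChar.mulShift (v ⬝ᵥ N.adjugate *ᵥ v))‖ := by
  have hQ := separatingLeft_polarBilin_toQuadraticForm' hN hd
  obtain ⟨w, hw, a, ha, hwa⟩ := exists_polar_eq_dotProduct hN hd v
  have hcard : Fintype.card (Fin s → ZMod (p ^ k)) = p ^ (k * s) := by
    rw [Fintype.card_fun, ZMod.card, Fintype.card_fin, pow_mul]
  simp only [← hw]
  rw [sum_units_sum_mul_add_polar_eq (quadGaussSum_units_smul hp2 hk hQ hcard) w, hwa, norm_mul,
    norm_gaussSum_mulShift_mul _ _ ha, norm_quadGaussSum_stdAddChar_prime_pow hQ, mul_comm]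

lemma norm_Sq_one_prime_pow (hp2 : p ≠ 2) (hk : k ≠ 0) {M₁ M₂ : Matrix (Fin s) (Fin s) ℤ}
    (hM₁ : M₁.IsSymm) (hM₂ : M₂.IsSymm) {c : ℤ × ℤ} (hc : Int.gcd c.1 c.2 = 1)
    (hpd : ¬ (p : ℤ) ∣ 2 * (c.1 • M₁ + c.2 • M₂).det) (u : Fin s → ℤ) :
    ‖Sq s M₁ M₂ (p ^ k) 1 c u‖ = (p : ℝ) ^ ((s : ℝ) * k / 2) *
      ‖gaussSum (changeLevel (dvd_pow_self p hk) (legendreChar p ^ (k * s)))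
        (ZMod.stdAddChar.mulShift
          ((u ⬝ᵥ (c.1 • M₁ + c.2 • M₂).adjugate *ᵥ u : ℤ) : ZMod (p ^ k)))‖ := by
  have hd : IsUnit (2 * ((c.1 • M₁ + c.2 • M₂).map (Int.cast : ℤ → ZMod (p ^ k))).det) := by
    have h := (isUnit_intCast_prime_pow_iff hk _).mpr hpd
    rwa [Int.cast_mul, Int.cast_ofNat, Int.cast_det] at h
  rw [Sq_one_eq_sum_units M₁ M₂ hc u, intCast_dotProduct_adjugate_mulVec,
    norm_sum_units_sum_stdAddChar_prime_pow hp2 hk (((hM₁.smul _).add (hM₂.smul _)).map _) hd]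

lemma norm_gaussSum_changeLevel_legendreChar_pow_le (hk : k ≠ 0) {n : ℕ} (hn : Even n) (m : ℤ) :
    ‖gaussSum (changeLevel (dvd_pow_self p hk) (legendreChar p ^ n))
      (ZMod.stdAddChar.mulShift (m : ZMod (p ^ k)))‖ ≤ m.gcd (p ^ k) := by
  obtain ⟨j, rfl⟩ := Nat.exists_eq_succ_of_ne_zero hk
  rw [isQuadratic_legendreChar.pow_even hn]
  exact norm_gaussSum_changeLevel_one_mulShift_le j m

lemma changeLevel_legendreChar_pow_ne_one (hp2 : p ≠ 2) (hk : k ≠ 0) {n : ℕ} (hn : Odd n) :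
    changeLevel (dvd_pow_self p hk) (legendreChar p ^ n) ≠ 1 := by
  rw [isQuadratic_legendreChar.pow_odd hn]
  exact (changeLevel_eq_one_iff (dvd_pow_self p hk)).not.mpr (legendreChar_ne_one hp2)

lemma norm_gaussSum_changeLevel_legendreChar_pow_le_rpow (hp2 : p ≠ 2) (hk : k ≠ 0) {n : ℕ}
    (hn : Odd n) (m : ℤ) :
    ‖gaussSum (changeLevel (dvd_pow_self p hk) (legendreChar p ^ n))
      (ZMod.stdAddChar.mulShift (m : ZMod (p ^ k)))‖
      ≤ (p : ℝ) ^ ((k : ℝ) / 2) * (m.gcd (p ^ k) : ℝ) ^ ((1 : ℝ) / 2) := by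
  obtain ⟨j, rfl⟩ := Nat.exists_eq_succ_of_ne_zero hk
  have hp : (p : ℝ) ^ (((j + 1 : ℕ) : ℝ) / 2) = √(p ^ (j + 1)) := by
    rw [Real.sqrt_eq_rpow, ← Real.rpow_natCast_mul p.cast_nonneg, mul_one_div]
  rw [isQuadratic_legendreChar.pow_odd hn, hp, ← Real.sqrt_eq_rpow,
    ← Real.sqrt_mul (by positivity)]
  exact Real.le_sqrt_of_sq_le
    (norm_gaussSum_changeLevel_mulShift_sq_le j (legendreChar_ne_one hp2) m)

end PrimePowerBounds

/-- bounds for `S_{p^k,c}(u)` at Type I good primes (Lemma 6.1). -/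
theorem statement17 (s : ℕ) (M₁ M₂ : Matrix (Fin s) (Fin s) ℤ)
    (hM₁ : M₁.IsSymm) (hM₂ : M₂.IsSymm)
    (c : ℤ × ℤ) (hc : Int.gcd c.1 c.2 = 1)
    (hdet : (c.1 • M₁ + c.2 • M₂).det ≠ 0)
    (p : ℕ) (hp : p.Prime) (hpd : ¬ ((p : ℤ) ∣ 2 * (c.1 • M₁ + c.2 • M₂).det))
    (k : ℕ) (hk : 1 ≤ k) (u : Fin s → ℤ) :
    ((Even s ∨ (Odd s ∧ Even k)) →
      ‖Sq s M₁ M₂ (p ^ k) 1 c u‖ ≤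
        (p : ℝ) ^ (((s : ℝ) * k) / 2) *
          (Int.gcd (u ⬝ᵥ ((c.1 • M₁ + c.2 • M₂).adjugate.mulVec u)) ((p : ℤ) ^ k) : ℝ)) ∧
    ((Odd s ∧ Odd k) →
      ((u ⬝ᵥ ((c.1 • M₁ + c.2 • M₂).adjugate.mulVec u) = 0 →
          Sq s M₁ M₂ (p ^ k) 1 c u = 0) ∧
        (u ⬝ᵥ ((c.1 • M₁ + c.2 • M₂).adjugate.mulVec u) ≠ 0 →
          ‖Sq s M₁ M₂ (p ^ k) 1 c u‖ ≤
            (p : ℝ) ^ (((k : ℝ) * ((s : ℝ) + 1)) / 2) *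
              (Int.gcd (u ⬝ᵥ ((c.1 • M₁ + c.2 • M₂).adjugate.mulVec u))
                ((p : ℤ) ^ k) : ℝ) ^ ((1 : ℝ) / 2)))) := by
  have : Fact p.Prime := ⟨hp⟩
  have hp2 : p ≠ 2 := by
    rintro rfl
    exact hpd (dvd_mul_right _ _)
  have hk0 : k ≠ 0 := Nat.one_le_iff_ne_zero.mp hk
  have hS := norm_Sq_one_prime_pow hp2 hk0 hM₁ hM₂ hc hpd u
  refine ⟨fun h => ?_, fun ⟨hs, hk⟩ => ⟨fun hF => ?_, fun _ => ?_⟩⟩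
  · have hn : Even (k * s) := Nat.even_mul.mpr (h.symm.imp_left And.right)
    rw [hS]
    gcongr
    exact norm_gaussSum_changeLevel_legendreChar_pow_le hk0 hn _
  · have hχ := changeLevel_legendreChar_pow_ne_one hp2 hk0 (hk.mul hs)
    rw [hF, Int.cast_zero, AddChar.mulShift_zero, gaussSum_one_right hχ, norm_zero, mul_zero] at hS
    exact norm_eq_zero.mp hS
  · have h := norm_gaussSum_changeLevel_legendreChar_pow_le_rpow hp2 hk0 (hk.mul hs)
      (u ⬝ᵥ (c.1 • M₁ + c.2 • M₂).adjugate *ᵥ u)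
    rw [hS, show (k : ℝ) * (s + 1) / 2 = s * k / 2 + k / 2 by ring,
      Real.rpow_add (Nat.cast_pos.mpr hp.pos), mul_assoc]
    gcongr
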